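/- Let W be a closed subset of 2^ω and let S := {σ : μ(W ∩ ⟦σ⟧) > 0}. Then S is a tree (closed under prefixes), [S] ⊆ W, μ([S]) = μ(W), and μ_σ([S]) > 0 for every σ ∈ S. -/

import Mathlib

open MeasureTheory

/-- The first `n` bits of `x ∈ 2^ω`, as a string. -/
def seg (x : ℕ → Bool) (n : ℕ) : List Bool := List.ofFn (fun i : Fin n => x i)

/-- The cylinder of a string: all `x ∈ 2^ω` with `σ` as a prefix. -/
def cyl (σ : List Bool) : Set (ℕ → Bool) := {x | seg x σ.length = σ}

/-- A tree: a set of strings closed under prefixes. -/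
def IsTree (T : Set (List Bool)) : Prop :=
  ∀ σ ∈ T, ∀ τ : List Bool, τ <+: σ → τ ∈ T

/-- The paths of a tree: those `x ∈ 2^ω` all of whose prefixes are in `T`. -/
def paths (T : Set (List Bool)) : Set (ℕ → Bool) := {x | ∀ n, seg x n ∈ T}

/-- Relative measure: `μ_τ(A) = 2^{|τ|} · μ(A ∩ ⟦τ⟧)`. -/
noncomputable def relMeasure (μ : Measure (ℕ → Bool)) (τ : List Bool)
    (A : Set (ℕ → Bool)) : ℝ :=
  2 ^ τ.length * (μ (A ∩ cyl τ)).toReal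

/-- The strongly positive tree associated with a closed set `W`:
the strings `σ` with `μ(W ∩ ⟦σ⟧) > 0`. -/
def posTree (μ : Measure (ℕ → Bool)) (W : Set (ℕ → Bool)) : Set (List Bool) :=
  {σ | 0 < μ (W ∩ cyl σ)}

theorem seg_eq_iff (x y : ℕ → Bool) (n : ℕ) : seg x n = seg y n ↔ ∀ i < n, x i = y i := by
  unfold seg
  rw [List.ofFn_inj, funext_iff]
  exact ⟨fun h i hi => h ⟨i, hi⟩, fun h i => h i i.2⟩

theorem cyl_anti (σ τ : List Bool) (h : τ <+: σ) : cyl σ ⊆ cyl τ := by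
  intro x hx
  obtain ⟨ρ, rfl⟩ := h
  simp only [cyl, Set.mem_setOf_eq] at *
  apply List.ext_getElem
  · simp [seg]
  · intro i h1 h2
    have h3 : (seg x (τ ++ ρ).length)[i]'(by simp [seg]; omega) = (τ ++ ρ)[i]'(by simp; omega) := by
      simp only [hx]
    rw [List.getElem_append_left h2] at h3
    simpa [seg] using h3

theorem seg_length (x : ℕ → Bool) (n : ℕ) : (seg x n).length = n := by simp [seg]

/-- **Strongly positive hull of a closed set.**
Let `W ⊆ 2^ω` be closed and `S := {σ : μ(W ∩ ⟦σ⟧) > 0}`.  Then `S` is a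
tree, `[S] ⊆ W`, `μ([S]) = μ(W)`, and `μ_σ([S]) > 0` for every `σ ∈ S`.
(`μ` is the fair-coin measure, characterized by its values on cylinders.) -/
theorem posTree_spec (μ : Measure (ℕ → Bool))
    (hμ : ∀ σ : List Bool, μ (cyl σ) = (2 : ENNReal)⁻¹ ^ σ.length)
    (W : Set (ℕ → Bool)) (hW : IsClosed W) :
    IsTree (posTree μ W) ∧
    paths (posTree μ W) ⊆ W ∧
    μ (paths (posTree μ W)) = μ W ∧
    ∀ σ ∈ posTree μ W, 0 < relMeasure μ σ (paths (posTree μ W)) := by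
  have hsub : paths (posTree μ W) ⊆ W := by
    intro x hx
    by_contra hxW
    obtain ⟨I, u, hu, hI⟩ := isOpen_pi_iff.1 hW.isOpen_compl x hxW
    have h1 : 0 < μ (W ∩ cyl (seg x (I.sup id + 1))) := hx _
    have h2 : W ∩ cyl (seg x (I.sup id + 1)) = ∅ := by
      ext y
      simp only [Set.mem_inter_iff, Set.mem_empty_iff_false, iff_false, not_and]
      intro hyW hy
      simp only [cyl, Set.mem_setOf_eq, seg_length] at hy
      rw [seg_eq_iff] at hy
      refine hI ?_ hyW
      intro i hi
      have : i ≤ I.sup id := Finset.le_sup (f := id) hi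
      rw [hy i (by omega)]
      exact (hu i hi).2
    rw [h2] at h1
    simp at h1
  have hnull : μ (W \ paths (posTree μ W)) = 0 := by
    have : W \ paths (posTree μ W) ⊆ ⋃ σ ∈ (posTree μ W)ᶜ, W ∩ cyl σ := by
      rintro x ⟨hxW, hx⟩
      simp only [paths, Set.mem_setOf_eq, not_forall] at hx
      obtain ⟨n, hn⟩ := hx
      refine Set.mem_biUnion (x := seg x n) hn ⟨hxW, ?_⟩
      simp [cyl, seg_length]
    refine measure_mono_null this ((measure_biUnion_null_iff (Set.to_countable _)).2 ?_)
    intro σ hσ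
    simpa [posTree] using hσ
  have key : ∀ A, μ (W ∩ A) ≤ μ (paths (posTree μ W) ∩ A) := by
    intro A
    calc μ (W ∩ A) ≤ μ ((paths (posTree μ W) ∩ A) ∪ (W \ paths (posTree μ W))) := by
          apply measure_mono
          rintro x ⟨h1, h2⟩
          by_cases h : x ∈ paths (posTree μ W)
          · exact Or.inl ⟨h, h2⟩
          · exact Or.inr ⟨h1, h⟩
      _ ≤ _ := measure_union_le _ _
      _ = _ := by rw [hnull, add_zero]
  refine ⟨?_, hsub, ?_, ?_⟩
  · intro σ hσ τ hτ
    exact lt_of_lt_of_le hσ (measure_mono (Set.inter_subset_inter_right _ (cyl_anti σ τ hτ)))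
  · refine le_antisymm (measure_mono hsub) ?_
    simpa using key Set.univ
  · intro σ hσ
    unfold relMeasure
    refine mul_pos (by positivity) (ENNReal.toReal_pos (lt_of_lt_of_le hσ (key _)).ne' ?_)
    refine ne_top_of_le_ne_top ?_ (measure_mono Set.inter_subset_right)
    rw [hμ]
    exact ENNReal.pow_ne_top (by simp)
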